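/- Let k ≥ 2 and j ∈ {1,…,k−1}. Let ω = ω(n) be a function with ω → ∞ and ω = o(log n), and let p = p(n) satisfy p_j^− ≤ p ≤ ((j+1)·log n + log log n − ω)·(k−j)!/((k−j+1)·n^{k−j}), where p_j^− := (1 − 1/√(log n))·(j+1)·(log n)·(k−j)!/((k−j+1)·n^{k−j}). Let X_- be the number of copies of M_j^- in G_p. Then E[X_-] = Ω(e^ω) (there is a constant c > 0 with E[X_-] ≥ c·e^ω for all sufficiently large n), and for every ε > 0, Pr(|X_- − E[X_-]| ≤ ε·E[X_-]) → 1 as n → ∞. -/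

import Mathlib

open MeasureTheory Filter

attribute [local instance] Classical.propDecidable

namespace RSC

variable {V : Type*}

/-- `A` is an `i`-dimensional simplex of the complex `G`. -/
def IsSimplex (G : Set (Finset V)) (i : ℕ) (A : Finset V) : Prop :=
  A ∈ G ∧ A.card = i + 1

/-- A `k`-dimensional simplicial complex on vertex set `V`. -/
structure IsKComplex (G : Set (Finset V)) (k : ℕ) : Prop where
  down : ∀ A ∈ G, ∀ B, B ⊆ A → B.Nonempty → B ∈ G
  singletons : ∀ v : V, ({v} : Finset V) ∈ G
  dim : ∀ A ∈ G, A.card ≤ k + 1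

/-- `i`-cochains with `F₂`-coefficients. -/
abbrev Cochain (G : Set (Finset V)) (i : ℕ) : Type _ :=
  {A : Finset V // IsSimplex G i A} → ZMod 2

/-- The coboundary map `δ^i : C^i(G) → C^{i+1}(G)`. -/
noncomputable def coboundary (G : Set (Finset V)) (i : ℕ) :
    Cochain G i →ₗ[ZMod 2] Cochain G (i + 1) where
  toFun f := fun σ => ∑ τ ∈ Finset.powersetCard (i + 1) (σ : Finset V),
      if h : IsSimplex G i τ then f ⟨τ, h⟩ else 0
  map_add' f g := by
    funext σ
    simp only [Pi.add_apply, ← Finset.sum_add_distrib]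
    refine Finset.sum_congr rfl fun τ _ => ?_
    by_cases h : IsSimplex G i τ <;> simp [h]
  map_smul' c f := by
    funext σ
    simp only [Pi.smul_apply, RingHom.id_apply, Finset.smul_sum]
    refine Finset.sum_congr rfl fun τ _ => ?_
    by_cases h : IsSimplex G i τ <;> simp [h]

/-- The submodule of `i`-cocycles. -/
noncomputable def cocycles (G : Set (Finset V)) (i : ℕ) : Submodule (ZMod 2) (Cochain G i) :=
  LinearMap.ker (coboundary G i)

/-- The submodule of `i`-coboundaries (`δ^{-1}` is the zero map). -/
noncomputable def coboundaries (G : Set (Finset V)) : (i : ℕ) → Submodule (ZMod 2) (Cochain G i)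
  | 0 => ⊥
  | (i + 1) => LinearMap.range (coboundary G i)

/-- The `i`-th cohomology group `H^i(G;F₂) = ker δ^i / im δ^{i-1}`. -/
noncomputable abbrev cohomology (G : Set (Finset V)) (i : ℕ) :=
  (cocycles G i) ⧸ ((coboundaries G i).comap (cocycles G i).subtype)

/-- `F₂`-cohomological `j`-connectedness: `H^0 ≅ F₂` and `H^i = 0` for `1 ≤ i ≤ j`. -/
def CohomConnected (G : Set (Finset V)) (j : ℕ) : Prop :=
  Nonempty (cohomology G 0 ≃ₗ[ZMod 2] ZMod 2) ∧
    ∀ i, 1 ≤ i → i ≤ j → Subsingleton (cohomology G i)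

/-- The `j`-flower in `K` with centre `C`: the set of petals `C ∪ {w}`, `w ∈ K \ C`. -/
def Flower [DecidableEq V] (K C : Finset V) : Set (Finset V) :=
  {P | ∃ w ∈ K \ C, P = insert w C}

/-- A copy of `M_j^-`: a `k`-simplex `K` together with a `(j-1)`-simplex `C ⊆ K` such that
each petal of the flower `F(K,C)` is contained in no `k`-simplex other than `K`. -/
def IsMjMinus [DecidableEq V] (G : Set (Finset V)) (k j : ℕ) (K C : Finset V) : Prop :=
  IsSimplex G k K ∧ C ∈ G ∧ C.card = j ∧ C ⊆ K ∧
    ∀ P ∈ Flower K C, ∀ K', IsSimplex G k K' → P ⊆ K' → K' = K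

/-- A `j`-cycle: every `(j-1)`-simplex lies in an even number of members of `J`. -/
def IsCycle (G : Set (Finset V)) (j : ℕ) (J : Finset (Finset V)) : Prop :=
  (∀ σ ∈ J, IsSimplex G j σ) ∧
    ∀ τ : Finset V, τ.card = j → Even (J.filter (fun σ => τ ⊆ σ)).card

/-- A copy of `M_j`. -/
def IsMj [DecidableEq V] (G : Set (Finset V)) (k j : ℕ) (K C : Finset V)
    (J : Finset (Finset V)) : Prop :=
  IsMjMinus G k j K C ∧ IsCycle G j J ∧ ∃! P : Finset V, P ∈ J ∧ P ∈ Flower K C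

/-- A `j`-shell: a `(j+2)`-set all of whose `(j+1)`-subsets are `j`-simplices. -/
def IsShell (G : Set (Finset V)) (j : ℕ) (A : Finset V) : Prop :=
  A.card = j + 2 ∧ ∀ τ ⊆ A, τ.card = j + 1 → τ ∈ G

/-- A copy of `M_j^*`. -/
def IsMjStar [DecidableEq V] (G : Set (Finset V)) (k j : ℕ) (K C : Finset V) (w a : V) : Prop :=
  IsMjMinus G k j K C ∧ w ∈ K \ C ∧ a ∉ K ∧ IsShell G j (insert a (insert w C))

/-- The support of a cochain. -/
def cochainSupport {G : Set (Finset V)} {i : ℕ} (f : Cochain G i) : Set (Finset V) :=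
  {A | ∃ h : IsSimplex G i A, f ⟨A, h⟩ = 1}

/-- A cochain arising from a copy of `M_j^-`: its support is the flower `F(K,C)`. -/
def ArisesFrom [DecidableEq V] (G : Set (Finset V)) (k j : ℕ) (f : Cochain G j)
    (K C : Finset V) : Prop :=
  IsMjMinus G k j K C ∧ cochainSupport f = Flower K C

/-- A `j`-cocycle generated by copies of `M_j^-`: it differs by a `j`-coboundary from a sum
of `j`-cocycles arising from copies of `M_j^-`. -/
def GeneratedByMjMinus [DecidableEq V] (G : Set (Finset V)) (k j : ℕ) (f : Cochain G j) : Prop :=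
  ∃ (m : ℕ) (fs : Fin m → Cochain G j),
    (∀ i, ∃ K C, ArisesFrom G k j (fs i) K C) ∧
      f - (∑ i, fs i) ∈ coboundaries G j

/-- Membership in `N_G`: a `j`-cocycle not generated by copies of `M_j^-`. -/
def InNG [DecidableEq V] (G : Set (Finset V)) (k j : ℕ) (f : Cochain G j) : Prop :=
  f ∈ cocycles G j ∧ ¬ GeneratedByMjMinus G k j f

/-- Traversability: the transitive closure of "lying in a common `k`-simplex" is `S × S`. -/
def Traversable (G : Set (Finset V)) (k : ℕ) (S : Set (Finset V)) : Prop :=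
  ∀ σ₁ ∈ S, ∀ σ₂ ∈ S,
    Relation.TransGen
      (fun a b => a ∈ S ∧ b ∈ S ∧ ∃ K, IsSimplex G k K ∧ a ⊆ K ∧ b ⊆ K) σ₁ σ₂

/-- A local obstacle: a `k`-simplex containing at least `k-j+1` many `j`-simplices,
each lying in no other `k`-simplex. -/
def IsLocalObstacle (G : Set (Finset V)) (k j : ℕ) (K : Finset V) : Prop :=
  IsSimplex G k K ∧
    k - j + 1 ≤ {σ : Finset V | IsSimplex G j σ ∧ σ ⊆ K ∧
      ∀ K', IsSimplex G k K' → σ ⊆ K' → K' = K}.ncard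

/-- The random complex `G_p` given birth times `t`: all singletons together with all
non-empty subsets of `(k+1)`-sets with birth time at most `p`. -/
def complexAt (k n : ℕ) (t : Finset (Fin n) → ℝ) (p : ℝ) : Set (Finset (Fin n)) :=
  {A | (∃ v, A = {v}) ∨
    (A.Nonempty ∧ ∃ K : Finset (Fin n), K.card = k + 1 ∧ t K ≤ p ∧ A ⊆ K)}

/-- The distribution of birth times: i.i.d. uniform on `[0,1]`. -/
noncomputable def birthMeasure (n : ℕ) : Measure (Finset (Fin n) → ℝ) :=
  Measure.pi fun _ => volume.restrict (Set.Icc (0 : ℝ) 1)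

/-- `p_{M_j}`: the supremum of the probabilities `p ∈ [0,1]` at which `G_p` contains
a copy of `M_j`. -/
noncomputable def pMj (k j n : ℕ) (t : Finset (Fin n) → ℝ) : ℝ :=
  sSup {p : ℝ | p ∈ Set.Icc (0 : ℝ) 1 ∧
    ∃ K C J, IsMj (complexAt k n t p) k j K C J}

/-- The threshold `p_j`. -/
noncomputable def pjThreshold (k j n : ℕ) : ℝ :=
  ((j + 1 : ℝ) * Real.log n + Real.log (Real.log n)) * (Nat.factorial (k - j)) /
    (((k - j + 1 : ℕ) : ℝ) * (n : ℝ) ^ (k - j))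

/-- `p_j^-`. -/
noncomputable def pjMinus (k j n : ℕ) : ℝ :=
  (1 - 1 / Real.sqrt (Real.log n)) * ((j + 1 : ℝ) * Real.log n) * (Nat.factorial (k - j)) /
    (((k - j + 1 : ℕ) : ℝ) * (n : ℝ) ^ (k - j))

/-- `p_{j-1}^-`. -/
noncomputable def pjPrevMinus (k j n : ℕ) : ℝ :=
  (1 - 1 / Real.sqrt (Real.log n)) * ((j : ℝ) * Real.log n) * (Nat.factorial (k - j + 1)) /
    (((k - j + 2 : ℕ) : ℝ) * (n : ℝ) ^ (k - j + 1))

/-- `p_j^{(1)}`. -/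
noncomputable def pjOne (k j n : ℕ) : ℝ :=
  1 / (10 * ((j : ℝ) + 1) * (Nat.choose (k + 1) (j + 1)) * (n : ℝ) ^ (k - j))

/-- The number of copies of `M_j^-` in `G`. -/
noncomputable def countMjMinus (k j : ℕ) {n : ℕ} (G : Set (Finset (Fin n))) : ℕ :=
  {x : Finset (Fin n) × Finset (Fin n) | IsMjMinus G k j x.1 x.2}.ncard

/-- The number of copies of `M_j^*` in `G`. -/
noncomputable def countMjStar (k j : ℕ) {n : ℕ} (G : Set (Finset (Fin n))) : ℕ :=
  {x : Finset (Fin n) × Finset (Fin n) × Fin n × Fin n |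
    IsMjStar G k j x.1 x.2.1 x.2.2.1 x.2.2.2}.ncard

/-- The expected number of copies of `M_j^-` in `G_q`. -/
noncomputable def expectMinus (k j n : ℕ) (q : ℝ) : ℝ :=
  ∫ t, (countMjMinus k j (complexAt k n t q) : ℝ) ∂(birthMeasure n)

/-!
Second moment method. A pair `(K, C)` is a copy of `M_j^-` exactly when `K` is present and all its
*blockers*, the other `(k+1)`-sets containing a petal of `F(K,C)`, are absent. There are at most
`(k-j+1) * n.choose (k-j)` blockers, so a pair is a copy with probability at least
`p * (1 - p) ^ ((k-j+1) * n.choose (k-j))`, and summing over the order of `n ^ (k+1)` pairs gives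
the bound on the expectation. Two copies with distinct `K` exclude each other when one of the two
sets is a blocker for the other; otherwise the two flowers share no petal, so they have only
`O(n ^ (k-j-1))` common blockers. This is `o(1/p)`, hence such pairs are asymptotically at most
uncorrelated. The pairs with a common `K` contribute only `O(E[X])` to `E[X ^ 2]`, so
`Var X = o(E[X] ^ 2)` and Chebyshev's inequality applies.
-/

open scoped Finset Topology ProbabilityTheory

section SecondMoment

variable {Ω ι : Type*} [MeasurableSpace Ω]

/-- The number of events of the finite family `A x`, `x ∈ I`, that occur, as a random variable. -/
noncomputable def eventCount (I : Finset ι) (A : ι → Set Ω) (t : Ω) : ℝ :=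
  ∑ x ∈ I, (A x).indicator 1 t

variable {P : Measure Ω} [IsFiniteMeasure P] {I : Finset ι} {A : ι → Set Ω}

lemma integrable_indicator_one {s : Set Ω} (hs : MeasurableSet s) :
    Integrable (s.indicator (1 : Ω → ℝ)) P :=
  (integrable_const 1).indicator hs

lemma memLp_eventCount (hA : ∀ x, MeasurableSet (A x)) : MemLp (eventCount I A) 2 P :=
  memLp_finsetSum I fun x _ => (memLp_const 1).indicator (hA x)

lemma integral_eventCount (hA : ∀ x, MeasurableSet (A x)) :
    ∫ t, eventCount I A t ∂P = ∑ x ∈ I, P.real (A x) := by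
  simp only [eventCount]
  rw [integral_finsetSum I fun x _ => integrable_indicator_one (hA x)]
  exact Finset.sum_congr rfl fun x _ => integral_indicator_one (hA x)

lemma integral_eventCount_sq (hA : ∀ x, MeasurableSet (A x)) :
    ∫ t, eventCount I A t ^ 2 ∂P = ∑ x ∈ I, ∑ y ∈ I, P.real (A x ∩ A y) := by
  have hsq : ∀ t, eventCount I A t ^ 2 = eventCount (I ×ˢ I) (fun z => A z.1 ∩ A z.2) t := by
    intro t
    simp only [eventCount, sq, Finset.sum_mul_sum, Finset.sum_product, Set.inter_indicator_one,
      Pi.mul_apply]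
  simp only [hsq]
  rw [integral_eventCount (A := fun z : ι × ι => A z.1 ∩ A z.2) fun z => (hA z.1).inter (hA z.2),
    Finset.sum_product]

lemma mul_integral_eventCount_sq_le (hA : ∀ x, MeasurableSet (A x))
    {r : ι → ι → Prop} [DecidableRel r] {q : ℝ} (hq : q ≤ 1)
    {D : ℕ} (hD : ∀ x ∈ I, #{y ∈ I | r x y} ≤ D)
    (hcorr : ∀ x ∈ I, ∀ y ∈ I, ¬ r x y → q * P.real (A x ∩ A y) ≤ P.real (A x) * P.real (A y)) :
    q * ∫ t, eventCount I A t ^ 2 ∂P ≤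
      (∫ t, eventCount I A t ∂P) ^ 2 + D * ∫ t, eventCount I A t ∂P := by
  have hpair : ∀ x ∈ I, ∀ y ∈ I, q * P.real (A x ∩ A y) ≤
      P.real (A x) * P.real (A y) + if r x y then P.real (A x) else 0 := by
    intro x hx y hy
    by_cases hxy : r x y
    · have hle : q * P.real (A x ∩ A y) ≤ P.real (A x) :=
        (mul_le_of_le_one_left measureReal_nonneg hq).trans (measureReal_mono Set.inter_subset_left)
      simpa only [if_pos hxy] using le_add_of_nonneg_of_le (by positivity) hle
    · simpa only [if_neg hxy, add_zero] using hcorr x hx y hy hxy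
  rw [integral_eventCount_sq hA, integral_eventCount hA, sq, Finset.sum_mul_sum, Finset.mul_sum,
    Finset.mul_sum, ← Finset.sum_add_distrib]
  refine Finset.sum_le_sum fun x hx => ?_
  rw [Finset.mul_sum]
  refine (Finset.sum_le_sum (hpair x hx)).trans ?_
  rw [Finset.sum_add_distrib, ← Finset.sum_filter, Finset.sum_const, nsmul_eq_mul]
  gcongr
  exact hD x hx

lemma variance_eventCount_div_sq_le [IsProbabilityMeasure P] (hA : ∀ x, MeasurableSet (A x))
    {r : ι → ι → Prop} [DecidableRel r] {q : ℝ} (hq0 : 0 < q) (hq1 : q ≤ 1)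
    {D : ℕ} (hD : ∀ x ∈ I, #{y ∈ I | r x y} ≤ D)
    (hcorr : ∀ x ∈ I, ∀ y ∈ I, ¬ r x y → q * P.real (A x ∩ A y) ≤ P.real (A x) * P.real (A y))
    (hE : 0 < ∫ t, eventCount I A t ∂P) :
    Var[eventCount I A; P] / (∫ t, eventCount I A t ∂P) ^ 2 ≤
      q⁻¹ - 1 + D / (q * ∫ t, eventCount I A t ∂P) := by
  have hsq := mul_integral_eventCount_sq_le hA hq1 hD hcorr
  rw [ProbabilityTheory.variance_eq_sub (memLp_eventCount hA)]
  simp only [Pi.pow_apply]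
  set E := ∫ t, eventCount I A t ∂P
  rw [← le_div_iff₀' hq0] at hsq
  rw [div_le_iff₀ (by positivity)]
  calc ∫ t, eventCount I A t ^ 2 ∂P - E ^ 2 ≤ (E ^ 2 + D * E) / q - E ^ 2 := by gcongr
    _ = (q⁻¹ - 1 + D / (q * E)) * E ^ 2 := by
        field_simp
        ring

end SecondMoment

section Chebyshev

variable {ι : Type*} {l : Filter ι} {Ω : ι → Type*} [∀ i, MeasurableSpace (Ω i)]
  {P : ∀ i, Measure (Ω i)} [∀ i, IsProbabilityMeasure (P i)] {X : ∀ i, Ω i → ℝ}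

lemma one_sub_variance_div_sq_le_measure (hX : ∀ i, MemLp (X i) 2 (P i)) {ε : ℝ} (hε : 0 < ε)
    {i : ι} (hi : 0 < (P i)[X i]) :
    1 - ENNReal.ofReal (Var[X i; P i] / (P i)[X i] ^ 2 / ε ^ 2) ≤
      P i {t | |X i t - (P i)[X i]| ≤ ε * (P i)[X i]} := by
  have hcheb : P i {t | ε * (P i)[X i] ≤ |X i t - (P i)[X i]|} ≤
      ENNReal.ofReal (Var[X i; P i] / (P i)[X i] ^ 2 / ε ^ 2) := by
    refine (ProbabilityTheory.meas_ge_le_variance_div_sq (hX i) (mul_pos hε hi)).trans_eq ?_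
    rw [mul_pow, mul_comm, div_mul_eq_div_div]
  rw [tsub_le_iff_right]
  calc (1 : ENNReal) = P i Set.univ := measure_univ.symm
    _ ≤ P i ({t | |X i t - (P i)[X i]| ≤ ε * (P i)[X i]} ∪
          {t | ε * (P i)[X i] ≤ |X i t - (P i)[X i]|}) := measure_mono fun t _ =>
        (le_total (|X i t - (P i)[X i]|) (ε * (P i)[X i])).elim Or.inl Or.inr
    _ ≤ _ := (measure_union_le _ _).trans (by gcongr)

theorem tendsto_measure_abs_sub_integral_le (hX : ∀ i, MemLp (X i) 2 (P i))
    (hpos : ∀ᶠ i in l, 0 < (P i)[X i])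
    (hvar : Tendsto (fun i => Var[X i; P i] / (P i)[X i] ^ 2) l (𝓝 0)) {ε : ℝ} (hε : 0 < ε) :
    Tendsto (fun i => P i {t | |X i t - (P i)[X i]| ≤ ε * (P i)[X i]}) l (𝓝 1) := by
  have hlower : Tendsto
      (fun i => 1 - ENNReal.ofReal (Var[X i; P i] / (P i)[X i] ^ 2 / ε ^ 2)) l (𝓝 1) := by
    have h := ENNReal.tendsto_ofReal (hvar.div_const (ε ^ 2))
    rw [zero_div, ENNReal.ofReal_zero] at h
    simpa only [tsub_zero] using
      ENNReal.Tendsto.sub tendsto_const_nhds h (Or.inl ENNReal.one_ne_top)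
  refine tendsto_of_tendsto_of_tendsto_of_le_of_le' hlower tendsto_const_nhds ?_
    (Eventually.of_forall fun _ => prob_le_one)
  filter_upwards [hpos] with i hi using one_sub_variance_div_sq_le_measure hX hε hi

end Chebyshev

section HitMiss

variable {ι Ω : Type*}

/-- The event that the coordinates indexed by `S` hit `s` and those indexed by `T` miss it. -/
def hitMiss (s : Set Ω) (S T : Finset ι) : Set (ι → Ω) :=
  {t | (∀ i ∈ S, t i ∈ s) ∧ ∀ i ∈ T, t i ∉ s}

variable {s : Set Ω} {S T S' T' : Finset ι}

lemma hitMiss_eq_pi [DecidableEq ι] (h : Disjoint S T) :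
    hitMiss s S T = ((S ∪ T : Finset ι) : Set ι).pi fun i => if i ∈ S then s else sᶜ := by
  ext t
  simp only [hitMiss, Set.mem_ofPred_eq, Set.mem_pi, Finset.mem_coe]
  have := Finset.disjoint_right.mp h
  grind

lemma hitMiss_inter [DecidableEq ι] :
    hitMiss s S T ∩ hitMiss s S' T' = hitMiss s (S ∪ S') (T ∪ T') := by
  ext t
  simp only [hitMiss, Set.mem_inter_iff, Set.mem_ofPred_eq, Finset.mem_union]
  grind

lemma hitMiss_eq_empty (h : ¬ Disjoint S T) : hitMiss s S T = ∅ := by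
  obtain ⟨i, hS, hT⟩ := Finset.not_disjoint_iff.mp h
  exact Set.eq_empty_of_forall_notMem fun t ht => ht.2 i hT (ht.1 i hS)

variable [MeasurableSpace Ω]

lemma measurableSet_hitMiss (hs : MeasurableSet s) : MeasurableSet (hitMiss s S T) := by
  simp only [hitMiss, Set.ofPred_and, Set.ofPred_forall]
  exact (Finset.measurableSet_biInter S fun i _ => measurable_pi_apply i hs).inter
    (Finset.measurableSet_biInter T fun i _ => (measurable_pi_apply i hs).compl)

variable [Fintype ι] (μ : Measure Ω) [IsProbabilityMeasure μ]

lemma measureReal_pi_hitMiss (h : Disjoint S T) :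
    (Measure.pi fun _ : ι => μ).real (hitMiss s S T) = μ.real s ^ #S * μ.real sᶜ ^ #T := by
  rw [hitMiss_eq_pi h, measureReal_def, Measure.pi_pi_finset, ENNReal.toReal_prod,
    Finset.prod_union h]
  congr 1
  · exact Finset.prod_eq_pow_card fun i hi => by rw [if_pos hi, measureReal_def]
  · exact Finset.prod_eq_pow_card fun i hi => by
      rw [if_neg (Finset.disjoint_right.mp h hi), measureReal_def]

lemma pow_mul_measureReal_pi_hitMiss_inter_le [DecidableEq ι] (hS : Disjoint S S')
    (hST : Disjoint S T) (hST' : Disjoint S' T') {m : ℕ}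
    (hm : Disjoint (S ∪ S') (T ∪ T') → #(T ∩ T') ≤ m) :
    μ.real sᶜ ^ m * (Measure.pi fun _ : ι => μ).real (hitMiss s S T ∩ hitMiss s S' T') ≤
      (Measure.pi fun _ : ι => μ).real (hitMiss s S T) *
        (Measure.pi fun _ : ι => μ).real (hitMiss s S' T') := by
  rw [hitMiss_inter]
  by_cases h : Disjoint (S ∪ S') (T ∪ T')
  · rw [measureReal_pi_hitMiss μ h, measureReal_pi_hitMiss μ hST, measureReal_pi_hitMiss μ hST']
    calc μ.real sᶜ ^ m * (μ.real s ^ #(S ∪ S') * μ.real sᶜ ^ #(T ∪ T'))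
        ≤ μ.real sᶜ ^ #(T ∩ T') * (μ.real s ^ #(S ∪ S') * μ.real sᶜ ^ #(T ∪ T')) :=
          mul_le_mul_of_nonneg_right
            (pow_le_pow_of_le_one measureReal_nonneg measureReal_le_one (hm h)) (by positivity)
      _ = μ.real s ^ #(S ∪ S') * μ.real sᶜ ^ (#(T ∪ T') + #(T ∩ T')) := by ring
      _ = μ.real s ^ #S * μ.real sᶜ ^ #T * (μ.real s ^ #S' * μ.real sᶜ ^ #T') := by
          rw [Finset.card_union_add_card_inter, Finset.card_union_of_disjoint hS]
          ring
  · rw [hitMiss_eq_empty h, measureReal_empty, mul_zero]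
    positivity

end HitMiss

section Blockers

variable [DecidableEq V]

/-- The `j`-flower `F(K,C)` as a finite set. -/
def petals (K C : Finset V) : Finset (Finset V) :=
  (K \ C).image (insert · C)

lemma mem_petals_iff {K C P : Finset V} : P ∈ petals K C ↔ P ∈ Flower K C := by
  simp only [petals, Finset.mem_image, Flower, Set.mem_ofPred_eq, eq_comm]

lemma card_of_mem_petals {K C P : Finset V} (hP : P ∈ petals K C) : #P = #C + 1 := by
  obtain ⟨w, hw, rfl⟩ := Finset.mem_image.mp hP
  exact Finset.card_insert_of_notMem (Finset.mem_sdiff.mp hw).2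

lemma subset_of_mem_petals {K C P : Finset V} (hC : C ⊆ K) (hP : P ∈ petals K C) : P ⊆ K := by
  obtain ⟨w, hw, rfl⟩ := Finset.mem_image.mp hP
  exact Finset.insert_subset (Finset.mem_sdiff.mp hw).1 hC

lemma card_petals_le {K C : Finset V} (hC : C ⊆ K) : #(petals K C) ≤ #K - #C :=
  Finset.card_image_le.trans (Finset.card_sdiff_of_subset hC).le

lemma lt_card_union_of_card_eq_of_ne {P Q : Finset V} (hcard : #P = #Q) (hne : P ≠ Q) :
    #P < #(P ∪ Q) :=
  Finset.card_lt_card <| Finset.subset_union_left.ssubset_of_ne fun h =>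
    hne (Finset.eq_of_subset_of_card_le (Finset.union_eq_left.mp h.symm) hcard.le).symm

variable [Fintype V]

lemma card_filter_superset_le (r : ℕ) (P : Finset V) :
    #{L ∈ Finset.powersetCard r Finset.univ | P ⊆ L} ≤ (Fintype.card V).choose (r - #P) := by
  rcases le_or_gt #P r with hP | hP
  · rw [Finset.card_filter_powersetCard_subset P _ r P.subset_univ hP, Finset.card_univ]
    exact Nat.choose_le_choose _ (Nat.sub_le _ _)
  · rw [Finset.filter_false_of_mem, Finset.card_empty]
    · exact Nat.zero_le _
    · intro L hL hPL
      exact hP.not_ge ((Finset.mem_powersetCard.mp hL).2 ▸ Finset.card_le_card hPL)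

/-- The sets whose presence prevents `(K, C)` from being a copy of `M_j^-`: those of the size of
`K`, other than `K`, that contain a petal of the flower `F(K,C)`. -/
def blockers (K C : Finset V) : Finset (Finset V) :=
  {L ∈ Finset.powersetCard #K Finset.univ | L ≠ K ∧ ∃ P ∈ petals K C, P ⊆ L}

lemma mem_blockers {K C L : Finset V} :
    L ∈ blockers K C ↔ #L = #K ∧ L ≠ K ∧ ∃ P ∈ petals K C, P ⊆ L := by
  simp only [blockers, Finset.mem_filter, Finset.mem_powersetCard, Finset.subset_univ, true_and]

lemma notMem_blockers_self (K C : Finset V) : K ∉ blockers K C :=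
  fun h => (mem_blockers.mp h).2.1 rfl

lemma card_blockers_le {K C : Finset V} (hC : C ⊆ K) :
    #(blockers K C) ≤ (#K - #C) * (Fintype.card V).choose (#K - #C - 1) := by
  have hsub : blockers K C ⊆ (petals K C).biUnion
      fun P => {L ∈ Finset.powersetCard #K Finset.univ | P ⊆ L} := by
    intro L hL
    obtain ⟨hcard, -, P, hP, hPL⟩ := mem_blockers.mp hL
    simp only [Finset.mem_biUnion, Finset.mem_filter, Finset.mem_powersetCard_univ]
    exact ⟨P, hP, hcard, hPL⟩
  refine (Finset.card_le_card hsub).trans <|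
    (Finset.card_biUnion_le_card_mul _ _ _ fun P hP => ?_).trans <|
      Nat.mul_le_mul_right _ (card_petals_le hC)
  rw [Nat.sub_sub, ← card_of_mem_petals hP]
  exact card_filter_superset_le _ _

lemma card_blockers_inter_le {K C K' C' : Finset V} (hC : C ⊆ K) (hC' : C' ⊆ K')
    (hKK' : #K = #K') (hCC' : #C = #C') (hpetals : Disjoint (petals K C) (petals K' C')) :
    #(blockers K C ∩ blockers K' C') ≤ (#K - #C) ^ 2 * Fintype.card V ^ (#K - #C - 2) := by
  have hsub : blockers K C ∩ blockers K' C' ⊆ (petals K C ×ˢ petals K' C').biUnion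
      fun P => {L ∈ Finset.powersetCard #K Finset.univ | P.1 ∪ P.2 ⊆ L} := by
    intro L hL
    obtain ⟨hL, hL'⟩ := Finset.mem_inter.mp hL
    obtain ⟨hcard, -, P, hP, hPL⟩ := mem_blockers.mp hL
    obtain ⟨-, -, P', hP', hPL'⟩ := mem_blockers.mp hL'
    simp only [Finset.mem_biUnion, Finset.mem_filter, Finset.mem_powersetCard_univ]
    exact ⟨(P, P'), Finset.mk_mem_product hP hP', hcard, Finset.union_subset hPL hPL'⟩
  have hpairs : #(petals K C ×ˢ petals K' C') ≤ (#K - #C) ^ 2 := by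
    rw [Finset.card_product, sq]
    exact Nat.mul_le_mul (card_petals_le hC) (hKK' ▸ hCC' ▸ card_petals_le hC')
  refine (Finset.card_le_card hsub).trans <|
    (Finset.card_biUnion_le_card_mul _ _ _ fun P hP => ?_).trans <| Nat.mul_le_mul_right _ hpairs
  -- Two distinct petals span at least `#C + 2` vertices, leaving at most `#K - #C - 2` to choose.
  obtain ⟨hP, hP'⟩ := Finset.mem_product.mp hP
  have hcard : #P.1 = #P.2 := by rw [card_of_mem_petals hP, card_of_mem_petals hP', hCC']
  have hunion := lt_card_union_of_card_eq_of_ne hcard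
    fun h => Finset.disjoint_left.mp hpetals hP (h ▸ hP')
  rw [card_of_mem_petals hP] at hunion
  have hV : 0 < Fintype.card V := by
    have := Finset.card_le_univ (P.1 ∪ P.2)
    omega
  calc #{L ∈ Finset.powersetCard #K Finset.univ | P.1 ∪ P.2 ⊆ L}
      ≤ (Fintype.card V).choose (#K - #(P.1 ∪ P.2)) := card_filter_superset_le _ _
    _ ≤ Fintype.card V ^ (#K - #(P.1 ∪ P.2)) := Nat.choose_le_pow _ _
    _ ≤ Fintype.card V ^ (#K - #C - 2) := Nat.pow_le_pow_right hV (by omega)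

lemma disjoint_petals_of_notMem_blockers {K C K' C' : Finset V} (hC' : C' ⊆ K') (hKK' : #K = #K')
    (hne : K ≠ K') (h : K' ∉ blockers K C) : Disjoint (petals K C) (petals K' C') :=
  Finset.disjoint_left.mpr fun P hP hP' =>
    h (mem_blockers.mpr ⟨hKK'.symm, hne.symm, P, hP, subset_of_mem_petals hC' hP'⟩)

end Blockers

section Candidates

variable (V) [DecidableEq V] [Fintype V]

/-- The pairs `(K, C)` that are copies of `M_j^-` in some `k`-complex on `V`. -/
def candidates (k j : ℕ) : Finset (Finset V × Finset V) :=
  {x ∈ Finset.powersetCard (k + 1) Finset.univ ×ˢ Finset.powersetCard j Finset.univ | x.2 ⊆ x.1}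

variable {V} {k j : ℕ} {x : Finset V × Finset V}

lemma mem_candidates : x ∈ candidates V k j ↔ #x.1 = k + 1 ∧ #x.2 = j ∧ x.2 ⊆ x.1 := by
  simp only [candidates, Finset.mem_filter, Finset.mem_product, Finset.mem_powersetCard_univ,
    and_assoc]

lemma card_filter_candidates_fst_eq {K : Finset V} (hK : #K = k + 1) :
    #{x ∈ candidates V k j | x.1 = K} = (k + 1).choose j := by
  have hfiber : {x ∈ candidates V k j | x.1 = K} = (Finset.powersetCard j K).image (K, ·) := by
    ext ⟨K', C⟩
    simp only [Finset.mem_filter, mem_candidates, Finset.mem_image, Finset.mem_powersetCard,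
      Prod.mk.injEq]
    grind
  rw [hfiber, Finset.card_image_of_injective _ (Prod.mk_right_injective K),
    Finset.card_powersetCard, hK]

lemma card_candidates :
    #(candidates V k j) = (Fintype.card V).choose (k + 1) * (k + 1).choose j := by
  have hmaps : (candidates V k j : Set (Finset V × Finset V)).MapsTo Prod.fst
      (Finset.powersetCard (k + 1) (Finset.univ : Finset V)) := fun x hx =>
    Finset.mem_powersetCard_univ.mpr (mem_candidates.mp hx).1
  rw [Finset.card_eq_sum_card_fiberwise hmaps, Finset.sum_const_nat fun K hK =>
    card_filter_candidates_fst_eq (Finset.mem_powersetCard_univ.mp hK),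
    Finset.card_powersetCard, Finset.card_univ]

end Candidates

section CopyEvent

/-- The event that the pair `(K, C)` is a copy of `M_j^-` in `G_p`: the birth time of `K` is at most
`p`, and that of each of its blockers is larger. -/
def copyEvent [DecidableEq V] [Fintype V] (p : ℝ) (x : Finset V × Finset V) :
    Set (Finset V → ℝ) :=
  hitMiss (Set.Iic p) {x.1} (blockers x.1 x.2)

lemma measurableSet_copyEvent [DecidableEq V] [Fintype V] (p : ℝ) (x : Finset V × Finset V) :
    MeasurableSet (copyEvent p x) :=
  measurableSet_hitMiss measurableSet_Iic

variable {k j n : ℕ} {p : ℝ}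

lemma isSimplex_complexAt_iff (hk : k ≠ 0) {t : Finset (Fin n) → ℝ} {K : Finset (Fin n)} :
    IsSimplex (complexAt k n t p) k K ↔ #K = k + 1 ∧ t K ≤ p := by
  constructor
  · rintro ⟨⟨v, rfl⟩ | ⟨-, L, hL, ht, hKL⟩, hK⟩
    · rw [Finset.card_singleton] at hK
      omega
    · obtain rfl := Finset.eq_of_subset_of_card_le hKL (by omega)
      exact ⟨hK, ht⟩
  · rintro ⟨hK, ht⟩
    exact ⟨Or.inr ⟨Finset.card_pos.mp (by omega), K, hK, ht, subset_rfl⟩, hK⟩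

lemma isMjMinus_complexAt_iff (hk : k ≠ 0) (hj : j ≠ 0) {t : Finset (Fin n) → ℝ}
    {x : Finset (Fin n) × Finset (Fin n)} :
    IsMjMinus (complexAt k n t p) k j x.1 x.2 ↔
      x ∈ candidates (Fin n) k j ∧ t ∈ copyEvent p x := by
  obtain ⟨K, C⟩ := x
  simp only [IsMjMinus, isSimplex_complexAt_iff hk, mem_candidates, copyEvent, hitMiss,
    Finset.mem_singleton, forall_eq, Set.mem_Iic, Set.mem_ofPred_eq, mem_blockers, mem_petals_iff]
  constructor
  · rintro ⟨⟨hK, ht⟩, -, hC, hCK, huniq⟩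
    refine ⟨⟨hK, hC, hCK⟩, ht, ?_⟩
    rintro L ⟨hL, hne, P, hP, hPL⟩ htL
    exact hne (huniq P hP L ⟨hL.trans hK, htL⟩ hPL)
  · rintro ⟨⟨hK, hC, hCK⟩, ht, hblock⟩
    refine ⟨⟨hK, ht⟩, Or.inr ⟨Finset.card_pos.mp (by omega), K, hK, ht, hCK⟩, hC, hCK, ?_⟩
    rintro P hP L ⟨hL, htL⟩ hPL
    by_contra hne
    exact hblock L ⟨hL.trans hK.symm, hne, P, hP, hPL⟩ htL

lemma countMjMinus_complexAt (hk : k ≠ 0) (hj : j ≠ 0) (t : Finset (Fin n) → ℝ) :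
    (countMjMinus k j (complexAt k n t p) : ℝ) =
      eventCount (candidates (Fin n) k j) (copyEvent p) t := by
  have hset : {x : Finset (Fin n) × Finset (Fin n) |
      IsMjMinus (complexAt k n t p) k j x.1 x.2} =
        ({x ∈ candidates (Fin n) k j | t ∈ copyEvent p x} : Finset _) := by
    ext x
    rw [Set.mem_ofPred_eq, isMjMinus_complexAt_iff hk hj, Finset.mem_coe, Finset.mem_filter]
  rw [countMjMinus, hset, Set.ncard_coe_finset, eventCount, Finset.card_filter, Nat.cast_sum]
  exact Finset.sum_congr rfl fun x _ => by simp [Set.indicator_apply]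

instance isProbabilityMeasure_volume_restrict_Icc_zero_one :
    IsProbabilityMeasure (volume.restrict (Set.Icc (0 : ℝ) 1)) :=
  ⟨by simp⟩

instance isProbabilityMeasure_birthMeasure : IsProbabilityMeasure (birthMeasure n) :=
  inferInstanceAs (IsProbabilityMeasure (Measure.pi _))

lemma volume_restrict_Icc_zero_one_real_Iic (hp : p ∈ Set.Icc (0 : ℝ) 1) :
    (volume.restrict (Set.Icc (0 : ℝ) 1)).real (Set.Iic p) = p := by
  rw [measureReal_restrict_apply measurableSet_Iic, Set.inter_comm, ← Set.Ici_inter_Iic,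
    Set.inter_assoc, Set.Iic_inter_Iic, Set.Ici_inter_Iic, inf_eq_right.mpr hp.2]
  simp [hp.1]

lemma volume_restrict_Icc_zero_one_real_compl_Iic (hp : p ∈ Set.Icc (0 : ℝ) 1) :
    (volume.restrict (Set.Icc (0 : ℝ) 1)).real (Set.Iic p)ᶜ = 1 - p := by
  rw [probReal_compl_eq_one_sub measurableSet_Iic, volume_restrict_Icc_zero_one_real_Iic hp]

lemma birthMeasure_real_copyEvent (hp : p ∈ Set.Icc (0 : ℝ) 1)
    (x : Finset (Fin n) × Finset (Fin n)) :
    (birthMeasure n).real (copyEvent p x) = p * (1 - p) ^ #(blockers x.1 x.2) := by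
  rw [birthMeasure, copyEvent, measureReal_pi_hitMiss _
    (Finset.disjoint_singleton_left.mpr (notMem_blockers_self _ _)), Finset.card_singleton, pow_one,
    volume_restrict_Icc_zero_one_real_Iic hp, volume_restrict_Icc_zero_one_real_compl_Iic hp]

lemma pow_mul_birthMeasure_real_copyEvent_inter_le (hp : p ∈ Set.Icc (0 : ℝ) 1)
    {x y : Finset (Fin n) × Finset (Fin n)} (hx : x ∈ candidates (Fin n) k j)
    (hy : y ∈ candidates (Fin n) k j) (hxy : x.1 ≠ y.1) :
    (1 - p) ^ ((k + 1 - j) ^ 2 * n ^ (k - j - 1)) *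
        (birthMeasure n).real (copyEvent p x ∩ copyEvent p y) ≤
      (birthMeasure n).real (copyEvent p x) * (birthMeasure n).real (copyEvent p y) := by
  obtain ⟨hxK, hxC, hxCK⟩ := mem_candidates.mp hx
  obtain ⟨hyK, hyC, hyCK⟩ := mem_candidates.mp hy
  rw [← volume_restrict_Icc_zero_one_real_compl_Iic hp]
  refine pow_mul_measureReal_pi_hitMiss_inter_le _ (Finset.disjoint_singleton.mpr hxy)
    (Finset.disjoint_singleton_left.mpr (notMem_blockers_self _ _))
    (Finset.disjoint_singleton_left.mpr (notMem_blockers_self _ _)) fun hdisj => ?_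
  -- If `y.1` blocks `x`, the two copies exclude each other and there is nothing to bound.
  have hyx : y.1 ∉ blockers x.1 x.2 := fun h =>
    Finset.disjoint_left.mp hdisj (Finset.mem_union_right _ (Finset.mem_singleton_self _))
      (Finset.mem_union_left _ h)
  have hKK := hxK.trans hyK.symm
  have hcard := card_blockers_inter_le hxCK hyCK hKK (hxC.trans hyC.symm)
    (disjoint_petals_of_notMem_blockers hyCK hKK hxy hyx)
  rwa [hxK, hxC, Fintype.card_fin, show k + 1 - j - 2 = k - j - 1 by omega] at hcard

end CopyEvent

section Estimates

lemma half_pow_div_factorial_le_choose {n r : ℕ} (h : 2 * r ≤ n) :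
    ((n : ℝ) / 2) ^ r / r.factorial ≤ n.choose r := by
  refine le_trans ?_ (Nat.pow_le_choose (α := ℝ) r n)
  have hn : (2 : ℝ) * r ≤ n := by exact_mod_cast h
  gcongr
  rw [Nat.cast_sub (by omega)]
  push_cast
  linarith

lemma exp_neg_add_sq_le_one_sub {x : ℝ} (hx : x ≤ 1 / 2) :
    Real.exp (-(x + 2 * x ^ 2)) ≤ 1 - x := by
  have hpos : 0 < 1 - x := by linarith
  have hinv : (1 - x)⁻¹ ≤ 1 + (x + 2 * x ^ 2) := by
    rw [inv_le_iff_one_le_mul₀ hpos]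
    nlinarith [mul_nonneg (sq_nonneg x) (by linarith : 0 ≤ 1 - 2 * x)]
  rw [← Real.le_log_iff_exp_le hpos]
  linarith [Real.one_sub_inv_le_log_of_pos hpos]

lemma exp_neg_add_one_le_one_sub_pow {x W : ℝ} {N : ℕ} (hx0 : 0 ≤ x) (hx : x ≤ 1 / 2)
    (hN : N * x ≤ W) (hW : 2 * x * W ≤ 1) : Real.exp (-(W + 1)) ≤ (1 - x) ^ N := by
  have hexponent : N * (x + 2 * x ^ 2) ≤ W + 1 := by
    calc N * (x + 2 * x ^ 2) = N * x + 2 * x * (N * x) := by ring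
      _ ≤ W + 2 * x * W := by gcongr
      _ ≤ W + 1 := by gcongr
  calc Real.exp (-(W + 1)) ≤ Real.exp (N * -(x + 2 * x ^ 2)) :=
        Real.exp_le_exp.mpr (by linarith)
    _ = Real.exp (-(x + 2 * x ^ 2)) ^ N := Real.exp_nat_mul _ _
    _ ≤ (1 - x) ^ N := by
        gcongr
        exact exp_neg_add_sq_le_one_sub hx

lemma exp_neg_mul_log_add_log_log_sub {x : ℝ} (hx : 1 < x) (r : ℕ) (w : ℝ) :
    Real.exp (-((r : ℝ) * Real.log x + Real.log (Real.log x) - w)) =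
      Real.exp w / (x ^ r * Real.log x) := by
  rw [neg_sub, Real.exp_sub, Real.exp_add, Real.exp_log (Real.log_pos hx), Real.exp_nat_mul,
    Real.exp_log (by linarith)]

lemma tendsto_one_sub_pow {ι : Type*} {l : Filter ι} {x : ι → ℝ} {N : ι → ℕ}
    (hx : ∀ᶠ i in l, x i ∈ Set.Icc 0 1) (h : Tendsto (fun i => N i * x i) l (𝓝 0)) :
    Tendsto (fun i => (1 - x i) ^ N i) l (𝓝 1) := by
  have hlower : Tendsto (fun i => 1 - N i * x i) l (𝓝 1) := by
    simpa only [sub_zero] using h.const_sub 1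
  refine tendsto_of_tendsto_of_tendsto_of_le_of_le' hlower tendsto_const_nhds ?_ ?_
  · filter_upwards [hx] with i hi
    have hbernoulli := one_add_mul_le_pow (a := -x i) (by linarith [hi.2]) (N i)
    rwa [mul_neg, ← sub_eq_add_neg, ← sub_eq_add_neg] at hbernoulli
  · filter_upwards [hx] with i hi
    exact pow_le_one₀ (by linarith [hi.2]) (by linarith [hi.1])

lemma tendsto_log_natCast_atTop : Tendsto (fun n : ℕ => Real.log n) atTop atTop :=
  Real.tendsto_log_atTop.comp tendsto_natCast_atTop_atTop

lemma eventually_nonneg_of_mul_log_div_pow_le {a : ℝ} (ha : 0 ≤ a) {d : ℕ} {p : ℕ → ℝ}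
    (hp : ∀ᶠ n : ℕ in atTop, a * (Real.log n / (n : ℝ) ^ d) ≤ p n) : ∀ᶠ n in atTop, 0 ≤ p n := by
  filter_upwards [hp] with n hn
  have := Real.log_natCast_nonneg n
  exact le_trans (by positivity) hn

lemma tendsto_pow_mul_mul_log {d : ℕ} (hd : d ≠ 0) {C : ℝ} {p : ℕ → ℝ}
    (hp0 : ∀ᶠ n in atTop, 0 ≤ p n) (hp : ∀ᶠ n : ℕ in atTop, p n ≤ C * (Real.log n / n ^ d)) :
    Tendsto (fun n : ℕ => (n : ℝ) ^ (d - 1) * (p n * Real.log n)) atTop (𝓝 0) := by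
  have hlim : Tendsto (fun n : ℕ => C * (Real.log n ^ 2 / n)) atTop (𝓝 0) := by
    simpa only [mul_zero, id_eq, Function.comp_def] using
      ((Real.isLittleO_pow_log_id_atTop (n := 2)).tendsto_div_nhds_zero.comp
        tendsto_natCast_atTop_atTop).const_mul C
  refine tendsto_of_tendsto_of_tendsto_of_le_of_le' tendsto_const_nhds hlim ?_ ?_
  · filter_upwards [hp0] with n hn
    have := Real.log_natCast_nonneg n
    positivity
  · filter_upwards [hp, eventually_ge_atTop 1] with n hn h1
    have := Real.log_natCast_nonneg n
    have : (0 : ℝ) < n := by exact_mod_cast h1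
    calc (n : ℝ) ^ (d - 1) * (p n * Real.log n)
        ≤ (n : ℝ) ^ (d - 1) * (C * (Real.log n / n ^ d) * Real.log n) := by gcongr
      _ = C * (Real.log n ^ 2 / n) := by
          rw [← mul_pow_sub_one hd (n : ℝ)]
          field_simp

lemma tendsto_mul_log {d : ℕ} {p : ℕ → ℝ} (hp0 : ∀ᶠ n in atTop, 0 ≤ p n)
    (hp : Tendsto (fun n : ℕ => (n : ℝ) ^ d * (p n * Real.log n)) atTop (𝓝 0)) :
    Tendsto (fun n : ℕ => p n * Real.log n) atTop (𝓝 0) := by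
  refine tendsto_of_tendsto_of_tendsto_of_le_of_le' tendsto_const_nhds hp ?_ ?_
  · filter_upwards [hp0] with n hn using mul_nonneg hn (Real.log_natCast_nonneg n)
  · filter_upwards [hp0, eventually_ge_atTop 1] with n hn h1
    exact le_mul_of_one_le_left (mul_nonneg hn (Real.log_natCast_nonneg n))
      (one_le_pow₀ (by exact_mod_cast h1))

lemma tendsto_of_tendsto_mul_log {p : ℕ → ℝ} (hp0 : ∀ᶠ n in atTop, 0 ≤ p n)
    (hp : Tendsto (fun n : ℕ => p n * Real.log n) atTop (𝓝 0)) : Tendsto p atTop (𝓝 0) := by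
  refine tendsto_of_tendsto_of_tendsto_of_le_of_le' tendsto_const_nhds hp hp0 ?_
  filter_upwards [hp0, tendsto_log_natCast_atTop.eventually_ge_atTop 1] with n hn hlog
  exact le_mul_of_one_le_right hn hlog

end Estimates

section Expectation

variable {k j n : ℕ}

lemma expectMinus_eq_integral_eventCount (hk : k ≠ 0) (hj : j ≠ 0) (p : ℝ) :
    expectMinus k j n p =
      ∫ t, eventCount (candidates (Fin n) k j) (copyEvent p) t ∂birthMeasure n := by
  simp only [expectMinus, countMjMinus_complexAt hk hj]

lemma choose_mul_le_expectMinus (hj : j ≠ 0) (hjk : j < k) {p : ℝ} (hp : p ∈ Set.Icc (0 : ℝ) 1) :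
    n.choose (k + 1) * (p * (1 - p) ^ ((k + 1 - j) * n.choose (k - j))) ≤ expectMinus k j n p := by
  have hprob : ∀ x ∈ candidates (Fin n) k j,
      p * (1 - p) ^ ((k + 1 - j) * n.choose (k - j)) ≤
        (birthMeasure n).real (copyEvent p x) := by
    intro x hx
    obtain ⟨hK, hC, hCK⟩ := mem_candidates.mp hx
    have hcard := card_blockers_le hCK
    rw [hK, hC, Fintype.card_fin, show k + 1 - j - 1 = k - j by omega] at hcard
    rw [birthMeasure_real_copyEvent hp]
    exact mul_le_mul_of_nonneg_left
      (pow_le_pow_of_le_one (by linarith [hp.2]) (by linarith [hp.1]) hcard) hp.1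
  have hcard : n.choose (k + 1) ≤ #(candidates (Fin n) k j) := by
    rw [card_candidates, Fintype.card_fin]
    exact Nat.le_mul_of_pos_right _ (Nat.choose_pos (by omega))
  have h0 : 0 ≤ p * (1 - p) ^ ((k + 1 - j) * n.choose (k - j)) :=
    mul_nonneg hp.1 (pow_nonneg (by linarith [hp.2]) _)
  rw [expectMinus_eq_integral_eventCount (by omega) hj,
    integral_eventCount (measurableSet_copyEvent p)]
  calc (n.choose (k + 1) : ℝ) * (p * (1 - p) ^ ((k + 1 - j) * n.choose (k - j)))
      ≤ #(candidates (Fin n) k j) * (p * (1 - p) ^ ((k + 1 - j) * n.choose (k - j))) := by gcongr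
    _ ≤ ∑ x ∈ candidates (Fin n) k j, (birthMeasure n).real (copyEvent p x) := by
        rw [← nsmul_eq_mul]
        exact Finset.card_nsmul_le_sum _ _ _ hprob

lemma half_pow_mul_exp_le_expectMinus (hj : j ≠ 0) (hjk : j < k) (hn : 2 * (k + 1) ≤ n) {p W : ℝ}
    (hp0 : 0 ≤ p) (hp : p ≤ 1 / 2) (hpW : 2 * p * W ≤ 1)
    (hW : p ≤ W * (k - j).factorial / ((k - j + 1 : ℕ) * (n : ℝ) ^ (k - j))) :
    ((n : ℝ) / 2) ^ (k + 1) / (k + 1).factorial * (p * Real.exp (-(W + 1))) ≤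
      expectMinus k j n p := by
  have hn0 : (0 : ℝ) < n := by exact_mod_cast (by omega : 0 < n)
  have hblockers : ((k + 1 - j) * n.choose (k - j) : ℕ) * p ≤ W := by
    calc (((k + 1 - j) * n.choose (k - j) : ℕ) : ℝ) * p
        ≤ (k - j + 1 : ℕ) * ((n : ℝ) ^ (k - j) / (k - j).factorial) *
            (W * (k - j).factorial / ((k - j + 1 : ℕ) * (n : ℝ) ^ (k - j))) := by
          rw [Nat.cast_mul, show k + 1 - j = k - j + 1 by omega]
          gcongr
          exact Nat.choose_le_pow_div _ _
      _ = W := by field_simp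
  refine le_trans ?_ (choose_mul_le_expectMinus hj hjk ⟨hp0, by linarith⟩)
  gcongr
  · exact half_pow_div_factorial_le_choose hn
  · exact exp_neg_add_one_le_one_sub_pow hp0 hp hblockers hpW

end Expectation

section Asymptotics

variable {k j : ℕ} {ω p : ℕ → ℝ}

lemma eventually_log_add_log_log_sub_le (hω : Tendsto ω atTop atTop) (b : ℝ) :
    ∀ᶠ n : ℕ in atTop, b * Real.log n + Real.log (Real.log n) - ω n ≤ (b + 1) * Real.log n := by
  filter_upwards [hω.eventually_ge_atTop 0] with n hωn
  linarith [Real.log_le_self (Real.log_natCast_nonneg n)]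

lemma eventually_le_mul_log_div_pow {b F m : ℝ} {d : ℕ} (hF : 0 ≤ F) (hm : 0 ≤ m)
    (hω : Tendsto ω atTop atTop) (hp : ∀ᶠ n : ℕ in atTop,
      p n ≤ (b * Real.log n + Real.log (Real.log n) - ω n) * F / (m * (n : ℝ) ^ d)) :
    ∀ᶠ n : ℕ in atTop, p n ≤ (b + 1) * F / m * (Real.log n / n ^ d) := by
  filter_upwards [hp, eventually_log_add_log_log_sub_le hω b] with n hpn hWn
  calc p n ≤ (b * Real.log n + Real.log (Real.log n) - ω n) * F / (m * (n : ℝ) ^ d) := hpn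
    _ ≤ (b + 1) * Real.log n * F / (m * (n : ℝ) ^ d) := by gcongr
    _ = (b + 1) * F / m * (Real.log n / n ^ d) := by ring

theorem exists_mul_exp_le_expectMinus (hj : j ≠ 0) (hjk : j < k) (hω : Tendsto ω atTop atTop)
    {a : ℝ} (ha : 0 < a)
    (hlower : ∀ᶠ n : ℕ in atTop, a * (Real.log n / (n : ℝ) ^ (k - j)) ≤ p n)
    (hupper : ∀ᶠ n : ℕ in atTop, p n ≤
      ((j + 1 : ℝ) * Real.log n + Real.log (Real.log n) - ω n) *
        (k - j).factorial / ((k - j + 1 : ℕ) * (n : ℝ) ^ (k - j))) :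
    ∃ c : ℝ, 0 < c ∧ ∀ᶠ n : ℕ in atTop, c * Real.exp (ω n) ≤ expectMinus k j n (p n) := by
  have hp0 := eventually_nonneg_of_mul_log_div_pow_le ha.le hlower
  have hplog := tendsto_mul_log hp0 <| tendsto_pow_mul_mul_log (by omega) hp0 <|
    eventually_le_mul_log_div_pow (by positivity) (by positivity) hω hupper
  have hhalf : ∀ᶠ n in atTop, p n ≤ 1 / 2 :=
    (tendsto_of_tendsto_mul_log hp0 hplog).eventually_le_const (by norm_num)
  have hsmall : ∀ᶠ n : ℕ in atTop, 2 * (j + 2 : ℝ) * (p n * Real.log n) ≤ 1 := by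
    have h := hplog.const_mul (2 * (j + 2 : ℝ))
    rw [mul_zero] at h
    exact h.eventually_le_const one_pos
  refine ⟨a * Real.exp (-1) / (2 ^ (k + 1) * (k + 1).factorial), by positivity, ?_⟩
  filter_upwards [hlower, hupper, hp0, hhalf, hsmall, eventually_ge_atTop (2 * (k + 1)),
    eventually_log_add_log_log_sub_le hω (j + 1)] with n hl hu h0 hh hs hn hW
  set W := (j + 1 : ℝ) * Real.log n + Real.log (Real.log n) - ω n with hWdef
  have hn1 : (1 : ℝ) < n := by exact_mod_cast (by omega : 1 < n)
  have hlog := Real.log_pos hn1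
  have hexp : Real.exp (-(W + 1)) =
      Real.exp (-1) * (Real.exp (ω n) / ((n : ℝ) ^ (j + 1) * Real.log n)) := by
    rw [← exp_neg_mul_log_add_log_log_sub hn1, ← Real.exp_add, hWdef]
    push_cast
    ring_nf
  have hpW : 2 * p n * W ≤ 1 := by
    calc 2 * p n * W ≤ 2 * p n * ((j + 1 + 1) * Real.log n) := by gcongr
      _ = 2 * (j + 2 : ℝ) * (p n * Real.log n) := by ring
      _ ≤ 1 := hs
  calc a * Real.exp (-1) / (2 ^ (k + 1) * (k + 1).factorial) * Real.exp (ω n)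
      = ((n : ℝ) / 2) ^ (k + 1) / (k + 1).factorial *
          (a * (Real.log n / (n : ℝ) ^ (k - j)) * Real.exp (-(W + 1))) := by
        rw [hexp, div_pow, show k + 1 = k - j + (j + 1) by omega, pow_add (n : ℝ)]
        field_simp
    _ ≤ ((n : ℝ) / 2) ^ (k + 1) / (k + 1).factorial * (p n * Real.exp (-(W + 1))) := by gcongr
    _ ≤ expectMinus k j n (p n) := half_pow_mul_exp_le_expectMinus hj hjk hn h0 hh hpW hu

lemma variance_eventCount_copyEvent_div_sq_le {n : ℕ} {p : ℝ} (hp0 : 0 ≤ p) (hp1 : p < 1)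
    (hE : 0 < ∫ t, eventCount (candidates (Fin n) k j) (copyEvent p) t ∂birthMeasure n) :
    Var[eventCount (candidates (Fin n) k j) (copyEvent p); birthMeasure n] /
        (∫ t, eventCount (candidates (Fin n) k j) (copyEvent p) t ∂birthMeasure n) ^ 2 ≤
      ((1 - p) ^ ((k + 1 - j) ^ 2 * n ^ (k - j - 1)))⁻¹ - 1 + (k + 1).choose j /
        ((1 - p) ^ ((k + 1 - j) ^ 2 * n ^ (k - j - 1)) *
          ∫ t, eventCount (candidates (Fin n) k j) (copyEvent p) t ∂birthMeasure n) :=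
  variance_eventCount_div_sq_le (measurableSet_copyEvent p) (r := fun x y => y.1 = x.1)
    (pow_pos (by linarith) _) (pow_le_one₀ (by linarith) (by linarith))
    (fun _ hx => (card_filter_candidates_fst_eq (mem_candidates.mp hx).1).le)
    (fun _ hx _ hy hxy =>
      pow_mul_birthMeasure_real_copyEvent_inter_le ⟨hp0, hp1.le⟩ hx hy (Ne.symm hxy)) hE

theorem tendsto_birthMeasure_abs_countMjMinus_sub_le (hk : k ≠ 0) (hj : j ≠ 0)
    (hp0 : ∀ᶠ n in atTop, 0 ≤ p n) (hp1 : ∀ᶠ n in atTop, p n < 1)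
    (hp : Tendsto (fun n : ℕ => (n : ℝ) ^ (k - j - 1) * p n) atTop (𝓝 0))
    (hE : Tendsto (fun n => expectMinus k j n (p n)) atTop atTop) {ε : ℝ} (hε : 0 < ε) :
    Tendsto (fun n : ℕ => birthMeasure n {t : Finset (Fin n) → ℝ |
      |(countMjMinus k j (complexAt k n t (p n)) : ℝ) - expectMinus k j n (p n)| ≤
        ε * expectMinus k j n (p n)}) atTop (𝓝 1) := by
  simp only [countMjMinus_complexAt hk hj, expectMinus_eq_integral_eventCount hk hj] at hE ⊢
  have hq : Tendsto (fun n => (1 - p n) ^ ((k + 1 - j) ^ 2 * n ^ (k - j - 1))) atTop (𝓝 1) := by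
    refine tendsto_one_sub_pow
      (by filter_upwards [hp0, hp1] with n h0 h1 using ⟨h0, h1.le⟩) ?_
    simpa only [Nat.cast_mul, Nat.cast_pow, mul_assoc, mul_zero] using
      hp.const_mul (((k + 1 - j : ℕ) : ℝ) ^ 2)
  have hbound := ((hq.inv₀ one_ne_zero).sub_const 1).add
    ((hq.pos_mul_atTop one_pos hE).const_div_atTop ((k + 1).choose j : ℝ))
  rw [inv_one, sub_self, zero_add] at hbound
  refine tendsto_measure_abs_sub_integral_le
    (fun n => memLp_eventCount (measurableSet_copyEvent (p n))) (hE.eventually_gt_atTop 0) ?_ hε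
  refine tendsto_of_tendsto_of_tendsto_of_le_of_le' tendsto_const_nhds hbound
    (Eventually.of_forall fun n =>
      div_nonneg (ProbabilityTheory.variance_nonneg _ _) (sq_nonneg _)) ?_
  filter_upwards [hp0, hp1, hE.eventually_gt_atTop 0] with n h0 h1 hEn
  exact variance_eventCount_copyEvent_div_sq_le h0 h1 hEn

lemma eventually_mul_log_div_pow_le_pjMinus (k j : ℕ) :
    ∀ᶠ n : ℕ in atTop, (1 / 2 * (j + 1 : ℝ) * (k - j).factorial / (k - j + 1 : ℕ)) *
      (Real.log n / (n : ℝ) ^ (k - j)) ≤ pjMinus k j n := by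
  filter_upwards [tendsto_log_natCast_atTop.eventually_ge_atTop 4] with n hn
  have hsqrt : (2 : ℝ) ≤ √(Real.log n) := Real.le_sqrt_of_sq_le (by linarith)
  have hhalf : (1 / 2 : ℝ) ≤ 1 - 1 / √(Real.log n) := by
    linarith [one_div_le_one_div_of_le two_pos hsqrt]
  calc (1 / 2 * (j + 1 : ℝ) * (k - j).factorial / (k - j + 1 : ℕ)) *
        (Real.log n / (n : ℝ) ^ (k - j))
      = 1 / 2 * ((j + 1 : ℝ) * Real.log n) * (k - j).factorial /
          ((k - j + 1 : ℕ) * (n : ℝ) ^ (k - j)) := by ring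
    _ ≤ pjMinus k j n := by
        rw [pjMinus]
        gcongr

end Asymptotics

theorem statement10_general {k j : ℕ} (hj : 1 ≤ j) (hjk : j < k) {ω : ℕ → ℝ}
    (hω : Tendsto ω atTop atTop) {p : ℕ → ℝ} {a : ℝ} (ha : 0 < a)
    (hlower : ∀ᶠ n : ℕ in atTop, a * (Real.log n / (n : ℝ) ^ (k - j)) ≤ p n)
    (hupper : ∀ᶠ n : ℕ in atTop, p n ≤
      ((j + 1 : ℝ) * Real.log n + Real.log (Real.log n) - ω n) *
        (k - j).factorial / ((k - j + 1 : ℕ) * (n : ℝ) ^ (k - j))) :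
    (∃ c : ℝ, 0 < c ∧ ∀ᶠ n : ℕ in atTop, c * Real.exp (ω n) ≤ expectMinus k j n (p n)) ∧
    ∀ ε : ℝ, 0 < ε → Tendsto (fun n : ℕ => birthMeasure n {t : Finset (Fin n) → ℝ |
      |(countMjMinus k j (complexAt k n t (p n)) : ℝ) - expectMinus k j n (p n)| ≤
        ε * expectMinus k j n (p n)}) atTop (𝓝 1) := by
  have hp0 := eventually_nonneg_of_mul_log_div_pow_le ha.le hlower
  have hscaled := tendsto_pow_mul_mul_log (by omega) hp0
    (eventually_le_mul_log_div_pow (by positivity) (by positivity) hω hupper)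
  have hplog := tendsto_mul_log hp0 hscaled
  have hexpect := exists_mul_exp_le_expectMinus (by omega) hjk hω ha hlower hupper
  refine ⟨hexpect, fun ε hε => ?_⟩
  obtain ⟨c, hc, hle⟩ := hexpect
  have hp1 : ∀ᶠ n in atTop, p n < 1 :=
    (tendsto_of_tendsto_mul_log hp0 hplog).eventually_lt_const one_pos
  have hpow : Tendsto (fun n : ℕ => (n : ℝ) ^ (k - j - 1) * p n) atTop (𝓝 0) := by
    refine tendsto_of_tendsto_mul_log ?_ (by simpa only [mul_assoc] using hscaled)
    filter_upwards [hp0] with n hn using by positivity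
  have hE : Tendsto (fun n => expectMinus k j n (p n)) atTop atTop :=
    tendsto_atTop_mono' _ hle ((Real.tendsto_exp_atTop.comp hω).const_mul_atTop hc)
  exact tendsto_birthMeasure_abs_countMjMinus_sub_le (by omega) (by omega) hp0 hp1 hpow hE hε

/-- Lemma 4.4: if `p_j^- ≤ p ≤ ((j+1)·log n + log log n - ω)·(k-j)!/((k-j+1)·n^{k-j})`
with `ω → ∞`, `ω = o(log n)`, then `E[X_-] = Ω(e^ω)` and whp `X_- = (1+o(1))·E[X_-]`. -/
theorem statement10 (k j : ℕ) (hk : 2 ≤ k) (hj : 1 ≤ j) (hjk : j < k)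
    (ω : ℕ → ℝ) (hω : Tendsto ω atTop atTop)
    (hωo : Tendsto (fun n : ℕ => ω n / Real.log n) atTop (nhds 0))
    (p : ℕ → ℝ)
    (hp : ∀ᶠ n : ℕ in atTop, pjMinus k j n ≤ p n ∧
      p n ≤ ((j + 1 : ℝ) * Real.log n + Real.log (Real.log n) - ω n) *
        (Nat.factorial (k - j)) / (((k - j + 1 : ℕ) : ℝ) * (n : ℝ) ^ (k - j))) :
    (∃ c : ℝ, 0 < c ∧ ∀ᶠ n : ℕ in atTop,
      c * Real.exp (ω n) ≤ expectMinus k j n (p n)) ∧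
    ∀ ε : ℝ, 0 < ε →
      Tendsto (fun n : ℕ => birthMeasure n {t : Finset (Fin n) → ℝ |
        |(countMjMinus k j (complexAt k n t (p n)) : ℝ) - expectMinus k j n (p n)| ≤
          ε * expectMinus k j n (p n)}) atTop (nhds 1) := by
  exact statement10_general hj hjk hω (by positivity)
    (((eventually_mul_log_div_pow_le_pjMinus k j).and hp).mono fun _ h => h.1.trans h.2.1)
    (hp.mono fun _ h => h.2)

end RSC
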